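/- Let Δ be a centrally symmetric simplicial complex on V ⊆ {±1,...,±n} and Θ as in the main theorem (all but possibly the last linear form anti-symmetric, the last anti-symmetric or the all-ones form). If for some i > 1 all i-stresses are symmetric and some nonzero j-stress exists for some j > i, then Δ contains the boundary complex of the j-cross-polytope as a subcomplex: there exist distinct indices k_1, ..., k_j such that every subset of {±k_1, ..., ±k_j} containing no antipodal pair is a face of Δ. -/

import Mathlib

open MvPolynomial

/-- The directional-derivative operator `∂_θ = ∑_v θ(v) ∂/∂x_v`. -/
noncomputable def Dop {V : Type*} [Fintype V] (θ : V → ℝ)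
    (w : MvPolynomial V ℝ) : MvPolynomial V ℝ :=
  ∑ v : V, θ v • pderiv v w

/-- A `j`-stress on `Δ` w.r.t. the linear forms `Θ`. -/
def IsStress (n ℓ j : ℕ) (Δ : Finset (Finset (Fin n × Bool)))
    (Θ : Fin ℓ → (Fin n × Bool) → ℝ) (w : MvPolynomial (Fin n × Bool) ℝ) : Prop :=
  w.IsHomogeneous j ∧ (∀ m ∈ w.support, m.support ∈ Δ) ∧ ∀ k : Fin ℓ, Dop (Θ k) w = 0

namespace CSStress

/-- The antipode. -/
abbrev ng {n : ℕ} (v : Fin n × Bool) : Fin n × Bool := (v.1, !v.2)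

lemma ng_ng {n : ℕ} (v : Fin n × Bool) : ng (ng v) = v := by simp [ng]

lemma ng_inj {n : ℕ} : Function.Injective (fun v : Fin n × Bool => (v.1, !v.2)) := by
  intro a b h
  simpa [Prod.ext_iff] using h

lemma ng_ne {n : ℕ} (v : Fin n × Bool) : ng v ≠ v := by
  intro h
  simpa using congrArg Prod.snd h

lemma pd_comm {σ : Type*} (u v : σ) (w : MvPolynomial σ ℝ) :
    pderiv u (pderiv v w) = pderiv v (pderiv u w) := by
  classical
  ext m
  simp only [coeff_pderiv, Finsupp.add_apply]
  rw [add_right_comm]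
  by_cases h : u = v
  · subst h; rfl
  · have h' : v ≠ u := fun e => h e.symm
    simp [Finsupp.single_apply, h, h']
    ring

lemma Dop_pd {σ : Type*} [Fintype σ] (θ : σ → ℝ) (v : σ) (w : MvPolynomial σ ℝ) :
    Dop θ (pderiv v w) = pderiv v (Dop θ w) := by
  simp only [Dop, map_sum, Derivation.map_smul]
  exact Finset.sum_congr rfl fun u _ => by rw [pd_comm]

lemma Dop_sub {σ : Type*} [Fintype σ] (θ : σ → ℝ) (a b : MvPolynomial σ ℝ) :
    Dop θ (a - b) = Dop θ a - Dop θ b := by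
  simp only [Dop, map_sub, smul_sub, Finset.sum_sub_distrib]

lemma Dop_add {σ : Type*} [Fintype σ] (θ : σ → ℝ) (a b : MvPolynomial σ ℝ) :
    Dop θ (a + b) = Dop θ a + Dop θ b := by
  simp only [Dop, map_add, smul_add, Finset.sum_add_distrib]

lemma Dop_mul {σ : Type*} [Fintype σ] (θ : σ → ℝ) (a b : MvPolynomial σ ℝ) :
    Dop θ (a * b) = Dop θ a * b + a * Dop θ b := by
  simp only [Dop, pderiv_mul, smul_add, Finset.sum_add_distrib, Finset.sum_mul, Finset.mul_sum,
    smul_mul_assoc, mul_smul_comm]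

lemma Dop_X {σ : Type*} [Fintype σ] (θ : σ → ℝ) (v : σ) :
    Dop θ (X v) = C (θ v) := by
  classical
  unfold Dop
  rw [Finset.sum_eq_single v]
  · simp [C_eq_smul_one]
  · intro b _ hb
    rw [pderiv_X_of_ne hb.symm, smul_zero]
  · simp

lemma supp_pd {σ : Type*} {v : σ} {w : MvPolynomial σ ℝ} {m : σ →₀ ℕ}
    (h : m ∈ (pderiv v w).support) : m + Finsupp.single v 1 ∈ w.support := by
  rw [mem_support_iff, coeff_pderiv] at h
  rw [mem_support_iff]
  exact left_ne_zero_of_mul h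

lemma zero_of_pd {σ : Type*} {d : ℕ} {f : MvPolynomial σ ℝ} (hf : f.IsHomogeneous d)
    (hd : d ≠ 0) (h : ∀ v, pderiv v f = 0) : f = 0 := by
  classical
  by_contra hne
  obtain ⟨m, hm⟩ := ne_zero_iff.mp hne
  have hdeg : m.degree = d := by
    by_contra h'
    exact hm (hf.coeff_eq_zero h')
  have : m ≠ 0 := by
    rintro rfl
    simp at hdeg
    exact hd hdeg.symm
  obtain ⟨v, hv⟩ := Finsupp.ne_iff.mp this
  have h1 := congrArg (coeff (m - Finsupp.single v 1)) (h v)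
  rw [coeff_pderiv, Finsupp.sub_add_single_one_cancel hv] at h1
  simp only [coeff_zero, mul_eq_zero, hm, false_or] at h1
  have : (0:ℝ) ≤ ((m - Finsupp.single v 1 : σ →₀ ℕ) v : ℝ) := Nat.cast_nonneg _
  linarith

lemma supp_add {σ : Type*} [DecidableEq σ] (m : σ →₀ ℕ) (v : σ) :
    (m + Finsupp.single v 1).support = insert v m.support := by
  ext u
  by_cases h : u = v
  · subst h; simp
  · have h' : v ≠ u := fun e => h e.symm
    simp [Finsupp.single_apply, h, h']

section
variable {n ℓ : ℕ} {Δ : Finset (Finset (Fin n × Bool))} {Θ : Fin ℓ → (Fin n × Bool) → ℝ}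

lemma stress_pd (hdown : ∀ s ∈ Δ, ∀ t ⊆ s, t ∈ Δ) {d : ℕ} {w : MvPolynomial (Fin n × Bool) ℝ}
    (hw : IsStress n ℓ (d + 1) Δ Θ w) (v : Fin n × Bool) :
    IsStress n ℓ d Δ Θ (pderiv v w) := by
  refine ⟨by simpa using hw.1.pderiv (i := v), fun m hm => ?_, fun k => ?_⟩
  · refine hdown _ (hw.2.1 _ (supp_pd hm)) _ ?_
    rw [supp_add]
    exact Finset.subset_insert _ _
  · rw [Dop_pd, hw.2.2 k, map_zero]

lemma no_pair (hdown : ∀ s ∈ Δ, ∀ t ⊆ s, t ∈ Δ)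
    (hff : ∀ s ∈ Δ, s ≠ ∅ → s.image (fun u : Fin n × Bool => (u.1, !u.2)) ≠ s)
    {s : Finset (Fin n × Bool)} (hs : s ∈ Δ) {v : Fin n × Bool} (h1 : v ∈ s) : ng v ∉ s := by
  intro h2
  refine hff {v, ng v} (hdown s hs _ ?_) (by simp) ?_
  · intro x hx
    simp only [Finset.mem_insert, Finset.mem_singleton] at hx
    rcases hx with rfl | rfl <;> assumption
  · rw [Finset.image_insert, Finset.image_singleton]
    simp [Finset.pair_comm]

lemma pd_pair (hdown : ∀ s ∈ Δ, ∀ t ⊆ s, t ∈ Δ)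
    (hff : ∀ s ∈ Δ, s ≠ ∅ → s.image (fun u : Fin n × Bool => (u.1, !u.2)) ≠ s)
    {d : ℕ} {w : MvPolynomial (Fin n × Bool) ℝ}
    (hw : IsStress n ℓ d Δ Θ w) (v : Fin n × Bool) : pderiv (ng v) (pderiv v w) = 0 := by
  by_contra hne
  obtain ⟨m, hm⟩ := ne_zero_iff.mp hne
  have h := hw.2.1 _ (supp_pd (supp_pd (mem_support_iff.mpr hm)))
  rw [supp_add, supp_add] at h
  exact no_pair hdown hff h (Finset.mem_insert_self v _) (by simp)

/-- The key fact for `(i+1)`-stresses. -/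
lemma key {i : ℕ} (hi : 1 < i) (hdown : ∀ s ∈ Δ, ∀ t ⊆ s, t ∈ Δ)
    (hff : ∀ s ∈ Δ, s ≠ ∅ → s.image (fun u : Fin n × Bool => (u.1, !u.2)) ≠ s)
    (hΘ : ∀ k : Fin ℓ, (∀ v : Fin n × Bool, Θ k (v.1, !v.2) = - Θ k v) ∨
                       ((k : ℕ) = ℓ - 1 ∧ ∀ v : Fin n × Bool, Θ k v = 1))
    (hsym : ∀ w, IsStress n ℓ i Δ Θ w →
      rename (fun v : Fin n × Bool => (v.1, !v.2)) w = w)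
    {w : MvPolynomial (Fin n × Bool) ℝ} (hw : IsStress n ℓ (i + 1) Δ Θ w) (v : Fin n × Bool) :
    pderiv v (pderiv v w) = 0 ∧ pderiv v w = pderiv (ng v) w := by
  have hα : ∀ u v, rename (fun v : Fin n × Bool => (v.1, !v.2)) (pderiv u (pderiv v w))
      = pderiv (ng u) (pderiv v w) := by
    intro u v
    have h1 := hsym _ (stress_pd hdown hw v)
    conv_rhs => rw [← h1]
    rw [← pderiv_rename ng_inj]
  have hsq : ∀ v, pderiv v (pderiv v w) = 0 := by
    intro v
    apply rename_injective _ ng_inj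
    rw [hα, pd_pair hdown hff hw, map_zero]
  have hrel : ∀ u v, pderiv u (pderiv v w) = pderiv (ng u) (pderiv (ng v) w) := by
    intro u v
    have h1 := hα (ng u) v
    rw [pd_comm, hα, ng_ng, pd_comm] at h1
    exact h1.symm
  obtain ⟨e, rfl⟩ : ∃ e, i = e + 1 := ⟨i - 1, by omega⟩
  have hG : ∀ p q : Fin n × Bool, p.1 ≠ q.1 →
      pderiv q (pderiv p w) - pderiv (ng q) (pderiv p w) = 0 := by
    intro p q hpq
    set G := pderiv q (pderiv p w) - pderiv (ng q) (pderiv p w) with hGdef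
    set Z : MvPolynomial (Fin n × Bool) ℝ := (X p + X (ng p)) - (X q + X (ng q)) with hZ
    have hGα : rename (fun v : Fin n × Bool => (v.1, !v.2)) G = - G := by
      rw [hGdef, map_sub, hα, hα, ng_ng]; ring
    have hZα : rename (fun v : Fin n × Bool => (v.1, !v.2)) Z = Z := by
      simp only [hZ, map_sub, map_add, rename_X, Bool.not_not]; ring
    have hZ0 : Z ≠ 0 := by
      intro h
      have := congrArg (pderiv p) h
      rw [hZ, map_sub, map_add, map_add, pderiv_X_self, pderiv_X_of_ne (ng_ne p),
        pderiv_X_of_ne (fun e => hpq (by rw [← e])),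
        pderiv_X_of_ne (fun e => hpq (by rw [← e]))] at this
      simp at this
    have hs1 := stress_pd hdown (stress_pd hdown hw p) q
    have hs2 := stress_pd hdown (stress_pd hdown hw p) (ng q)
    have hface : ∀ m ∈ G.support, ∀ a, (a = p ∨ a = ng p ∨ a = q ∨ a = ng q) →
        insert a m.support ∈ Δ := by
      intro m hm a ha
      have hor : m ∈ (pderiv q (pderiv p w)).support ∨
          m ∈ (pderiv (ng q) (pderiv p w)).support := by
        by_contra hcon
        push Not at hcon
        simp only [mem_support_iff, not_not] at hcon hm
        exact hm (by rw [hGdef, coeff_sub, hcon.1, hcon.2, sub_zero])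
      have aux : ∀ x y, m ∈ (pderiv x (pderiv y w)).support →
          insert x m.support ∈ Δ ∧ insert y m.support ∈ Δ := by
        intro x y h
        have h := hw.2.1 _ (supp_pd (supp_pd h))
        rw [supp_add, supp_add] at h
        refine ⟨hdown _ h _ ?_, hdown _ h _ ?_⟩
        · exact Finset.subset_insert _ _
        · exact Finset.insert_subset_insert _ (Finset.subset_insert _ _)
      rcases hor with h | h
      · have h1 := aux _ _ h
        rw [hrel] at h
        have h2 := aux _ _ h
        rcases ha with h | h | h | h <;> rw [h]
        exacts [h1.2, h2.2, h1.1, h2.1]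
      · have h1 := aux _ _ h
        rw [hrel, ng_ng] at h
        have h2 := aux _ _ h
        rcases ha with h | h | h | h <;> rw [h]
        exacts [h1.2, h2.2, h2.1, h1.1]
    have hW : IsStress n ℓ (e + 1) Δ Θ (Z * G) := by
      refine ⟨?_, fun m hm => ?_, fun k => ?_⟩
      · rw [add_comm]
        refine IsHomogeneous.mul ?_ (hs1.1.sub hs2.1)
        exact ((isHomogeneous_X _ _).add (isHomogeneous_X _ _)).sub
          ((isHomogeneous_X _ _).add (isHomogeneous_X _ _))
      · have hex : ∃ a, (a = p ∨ a = ng p ∨ a = q ∨ a = ng q) ∧ m ∈ (X a * G).support := by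
          by_contra hcon
          push Not at hcon
          simp only [mem_support_iff, not_not] at hcon hm
          apply hm
          rw [hZ, sub_mul, add_mul, add_mul, coeff_sub, coeff_add, coeff_add,
            hcon p (Or.inl rfl), hcon (ng p) (Or.inr (Or.inl rfl)),
            hcon q (Or.inr (Or.inr (Or.inl rfl))), hcon (ng q) (Or.inr (Or.inr (Or.inr rfl)))]
          simp
        obtain ⟨a, ha, hma⟩ := hex
        rw [mem_support_iff, coeff_X_mul'] at hma
        split_ifs at hma with hin
        · have := hface _ (mem_support_iff.mpr hma) a ha
          rw [← supp_add, Finsupp.sub_add_single_one_cancel (Finsupp.mem_support_iff.mp hin)] at this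
          exact this
        · exact absurd rfl hma
      · have hG0 : Dop (Θ k) G = 0 := by
          rw [hGdef, Dop_sub, hs1.2.2 k, hs2.2.2 k, sub_zero]
        rw [Dop_mul, hG0, hZ, Dop_sub, Dop_add, Dop_add]
        simp only [Dop_X]
        rcases hΘ k with h | ⟨_, h⟩
        · rw [h p, h q]; simp
        · simp [h]
    have h := hsym _ hW
    rw [map_mul, hZα, hGα] at h
    have h2 := mul_left_cancel₀ hZ0 h
    have h3 : (2 : ℝ) • G = 0 := by
      rw [two_smul]
      nth_rewrite 1 [← h2]
      ring
    exact (smul_eq_zero.mp h3).resolve_left two_ne_zero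
  refine ⟨hsq v, ?_⟩
  rw [← sub_eq_zero]
  refine zero_of_pd (d := e + 1) ((stress_pd hdown hw v).1.sub (stress_pd hdown hw (ng v)).1)
    (by omega) fun u => ?_
  rw [map_sub, pd_comm u v, pd_comm u (ng v)]
  by_cases huv : u.1 = v.1
  · have : u = v ∨ u = ng v := by
      obtain ⟨a, b⟩ := u
      obtain ⟨c, d⟩ := v
      simp only at huv
      subst huv
      cases b <;> cases d <;> simp
    rcases this with rfl | rfl
    · rw [hsq, pd_pair hdown hff hw, sub_zero]
    · rw [hsq, pd_comm, pd_pair hdown hff hw, sub_zero]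
  · exact hG u v huv

lemma key' {i : ℕ} (hi : 1 < i) (hdown : ∀ s ∈ Δ, ∀ t ⊆ s, t ∈ Δ)
    (hff : ∀ s ∈ Δ, s ≠ ∅ → s.image (fun u : Fin n × Bool => (u.1, !u.2)) ≠ s)
    (hΘ : ∀ k : Fin ℓ, (∀ v : Fin n × Bool, Θ k (v.1, !v.2) = - Θ k v) ∨
                       ((k : ℕ) = ℓ - 1 ∧ ∀ v : Fin n × Bool, Θ k v = 1))
    (hsym : ∀ w, IsStress n ℓ i Δ Θ w →
      rename (fun v : Fin n × Bool => (v.1, !v.2)) w = w) (d : ℕ) :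
    ∀ {w : MvPolynomial (Fin n × Bool) ℝ}, IsStress n ℓ (i + 1 + d) Δ Θ w →
    ∀ v : Fin n × Bool, pderiv v (pderiv v w) = 0 ∧ pderiv v w = pderiv (ng v) w := by
  induction d with
  | zero => intro w hw v; exact key hi hdown hff hΘ hsym hw v
  | succ d ih =>
    intro w hw v
    have hs := fun u => stress_pd (d := i + 1 + d) hdown hw u
    have hs' : ∀ u, IsStress n ℓ (i + d + 1) Δ Θ (pderiv u w) := fun u => by
      have := hs u
      rwa [add_right_comm] at this
    constructor
    · refine zero_of_pd (stress_pd hdown (hs' v) v).1 (by omega) fun u => ?_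
      rw [pd_comm u v, pd_comm u v]
      exact (ih (hs u) v).1
    · rw [← sub_eq_zero]
      refine zero_of_pd ((hs v).1.sub (hs (ng v)).1) (by omega) fun u => ?_
      rw [map_sub, pd_comm u v, pd_comm u (ng v), sub_eq_zero]
      exact (ih (hs u) v).2

lemma comb {j : ℕ} (F : Finset (Fin n × Bool) → Prop)
    (hΔ : ∀ s, F s → s ∈ Δ) (hcard : ∀ s, F s → s.card = j)
    (hpair : ∀ s, F s → ∀ v ∈ s, ng v ∉ s)
    (hflip : ∀ s, F s → ∀ v ∈ s, F (insert (ng v) (s.erase v)))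
    (hdown : ∀ s ∈ Δ, ∀ t ⊆ s, t ∈ Δ) (hne : ∃ s, F s) :
    ∃ T : Finset (Fin n), T.card = j ∧
      ∀ S : Finset (Fin n × Bool), (∀ v ∈ S, v.1 ∈ T) →
        (∀ k : Fin n, ¬((k, true) ∈ S ∧ (k, false) ∈ S)) → S ∈ Δ := by
  classical
  obtain ⟨s0, hs0⟩ := hne
  refine ⟨s0.image Prod.fst, ?_, fun S hS hanti => ?_⟩
  · rw [Finset.card_image_of_injOn, hcard s0 hs0]
    intro a ha b hb hab
    by_contra hne
    apply hpair s0 hs0 a ha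
    have : ng a = b := by
      obtain ⟨a1, a2⟩ := a
      obtain ⟨b1, b2⟩ := b
      simp only at hab
      subst hab
      cases a2 <;> cases b2 <;> simp_all
    rw [this]; exact hb
  · have hanti' : ∀ v ∈ S, ng v ∉ S := by
      rintro ⟨a, b⟩ h1 h2
      cases b
      · exact hanti a ⟨h2, h1⟩
      · exact hanti a ⟨h1, h2⟩
    suffices H : ∀ N : ℕ, ∀ s, F s → (∀ v ∈ S, v ∈ s ∨ ng v ∈ s) → (S \ s).card = N → S ∈ Δ by
      refine H _ s0 hs0 ?_ rfl
      intro v hv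
      obtain ⟨u, hu, huv⟩ := Finset.mem_image.mp (hS v hv)
      obtain ⟨a, b⟩ := u
      obtain ⟨c, d⟩ := v
      simp only at huv
      subst huv
      clear H hpair hflip hS hanti hanti' hv
      cases b <;> cases d <;> simp [ng, hu]
    intro N
    induction N with
    | zero =>
      intro s hs _ h0
      exact hdown s (hΔ s hs) S (Finset.sdiff_eq_empty_iff_subset.mp (Finset.card_eq_zero.mp h0))
    | succ N ih =>
      intro s hs hcov hN
      obtain ⟨v, hv⟩ : (S \ s).Nonempty := by rw [← Finset.card_pos]; omega
      rw [Finset.mem_sdiff] at hv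
      have hnv : ng v ∈ s := (hcov v hv.1).resolve_left hv.2
      have hF := hflip s hs _ hnv
      rw [ng_ng] at hF
      refine ih _ hF ?_ ?_
      · intro u hu
        by_cases huv : u = v
        · subst huv; left; simp
        · rcases hcov u hu with h | h
          · left
            refine Finset.mem_insert_of_mem (Finset.mem_erase.mpr ⟨?_, h⟩)
            rintro rfl
            exact hanti' v hv.1 hu
          · right
            refine Finset.mem_insert_of_mem (Finset.mem_erase.mpr ⟨?_, h⟩)
            intro h'
            apply huv
            rw [← ng_ng u, h', ng_ng]
      · have : S \ insert v (s.erase (ng v)) = (S \ s).erase v := by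
          ext u
          simp only [Finset.mem_sdiff, Finset.mem_insert, Finset.mem_erase]
          by_cases hu : u = ng v
          · subst hu
            have := hanti' v hv.1
            tauto
          · tauto
        rw [this, Finset.card_erase_of_mem (Finset.mem_sdiff.mpr hv), hN]
        rfl

end

end CSStress

open CSStress

/-- with `Θ` as in the main theorem, if for some `i > 1` all
`i`-stresses on `Δ` are symmetric and there is a nonzero `j`-stress for some
`j > i`, then `Δ` contains the boundary complex of the `j`-cross-polytope as a
subcomplex: there are `j` distinct indices `k_1, …, k_j` such that every subset
of `{±k_1, …, ±k_j}` with no antipodal pair is a face of `Δ`. -/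
theorem stmt_16 (n ℓ i j : ℕ) (hi : 1 < i) (hij : i < j)
    (Δ : Finset (Finset (Fin n × Bool)))
    (hdown : ∀ s ∈ Δ, ∀ t ⊆ s, t ∈ Δ)
    (hmap : ∀ s ∈ Δ, s.image (fun u : Fin n × Bool => (u.1, !u.2)) ∈ Δ)
    (hfacefree : ∀ s ∈ Δ, s ≠ ∅ → s.image (fun u : Fin n × Bool => (u.1, !u.2)) ≠ s)
    (Θ : Fin ℓ → (Fin n × Bool) → ℝ)
    (hΘ : ∀ k : Fin ℓ, (∀ v : Fin n × Bool, Θ k (v.1, !v.2) = - Θ k v) ∨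
                       ((k : ℕ) = ℓ - 1 ∧ ∀ v : Fin n × Bool, Θ k v = 1))
    (hsym : ∀ w, IsStress n ℓ i Δ Θ w →
      rename (fun v : Fin n × Bool => (v.1, !v.2)) w = w)
    (hnz : ∃ w, IsStress n ℓ j Δ Θ w ∧ w ≠ 0) :
    ∃ T : Finset (Fin n), T.card = j ∧
      ∀ S : Finset (Fin n × Bool), (∀ v ∈ S, v.1 ∈ T) →
        (∀ k : Fin n, ¬((k, true) ∈ S ∧ (k, false) ∈ S)) → S ∈ Δ := by
  classical
  obtain ⟨w, hw, hw0⟩ := hnz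
  obtain ⟨d, rfl⟩ : ∃ d, j = i + 1 + d := ⟨j - (i + 1), by omega⟩
  have hk := key' hi hdown hfacefree hΘ hsym d hw
  have hle : ∀ m ∈ w.support, ∀ v, m v ≤ 1 := by
    intro m hm v
    by_contra hcon
    push Not at hcon
    have h := congrArg (coeff (m - Finsupp.single v 1 - Finsupp.single v 1)) (hk v).1
    rw [coeff_pderiv, coeff_pderiv, Finsupp.sub_add_single_one_cancel (by simp; omega),
      Finsupp.sub_add_single_one_cancel (by omega), coeff_zero] at h
    rw [mem_support_iff] at hm
    have h1 : ∀ x : ℕ, (x : ℝ) + 1 ≠ 0 := fun x => by positivity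
    exact mul_ne_zero (mul_ne_zero hm (h1 _)) (h1 _) h
  refine comb (fun s => ∃ m ∈ w.support, m.support = s) ?_ ?_ ?_ ?_ hdown ?_
  · rintro s ⟨m, hm, rfl⟩
    exact hw.2.1 m hm
  · rintro s ⟨m, hm, rfl⟩
    rw [hw.1.degree_eq_sum_deg_support hm, Finset.card_eq_sum_ones]
    refine Finset.sum_congr rfl fun v hv => ?_
    have := hle m hm v
    have := Finsupp.mem_support_iff.mp hv
    omega
  · rintro s ⟨m, hm, rfl⟩ v hv
    exact no_pair hdown hfacefree (hw.2.1 m hm) hv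
  · rintro s ⟨m, hm, rfl⟩ v hv
    have hv' := Finsupp.mem_support_iff.mp hv
    refine ⟨(m - Finsupp.single v 1) + Finsupp.single (ng v) 1, ?_, ?_⟩
    · apply supp_pd
      rw [← (hk v).2, mem_support_iff, coeff_pderiv, Finsupp.sub_add_single_one_cancel hv']
      have h1 : ∀ x : ℕ, (x : ℝ) + 1 ≠ 0 := fun x => by positivity
      exact mul_ne_zero (mem_support_iff.mp hm) (h1 _)
    · rw [supp_add]
      congr 1
      ext u
      have := hle m hm v
      by_cases huv : u = v
      · subst huv; simp; omega
      · have h' : v ≠ u := fun e => huv e.symm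
        simp [Finsupp.single_apply, huv, h']
  · obtain ⟨m, hm⟩ := ne_zero_iff.mp hw0
    exact ⟨_, m, mem_support_iff.mpr hm, rfl⟩
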